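/- arXiv:math/0402147 — 6 statements merged into one kernel-verified Lean document; each statement's English description precedes it below -/
import Mathlib

section
/- Let Λ be a lattice in ℂ and let a ∈ ℂ satisfy aΛ ⊆ Λ. Then 2·Re(a) is an integer and |a|² (the square of the absolute value of a, i.e. Complex.normSq a) is an integer. -/
/-!
An `S`-basis of a module is also an `R`-basis of the `R`-lattice it spans, so an `S`-linear
endomorphism preserving this lattice has the same matrix as its restriction to the lattice; in
particular its trace and determinant come from `R`. For multiplication by `a` on the real plane `ℂ`
these are `2 * a.re` and `Complex.normSq a`.
-/

open Module

section StableSpan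

variable {R S M ι : Type*} [CommRing R] [IsDomain R] [CommRing S] [Nontrivial S] [Algebra R S]
  [IsTorsionFree R S] [AddCommGroup M] [Module R M] [Module S M] [IsScalarTower R S M]
  (b : Basis ι S M) (f : M →ₗ[S] M)
  (hf : ∀ x ∈ Submodule.span R (Set.range b),
    f.restrictScalars R x ∈ Submodule.span R (Set.range b))

theorem map_algebraMap_toMatrix_restrict_span [Fintype ι] [DecidableEq ι] :
    (LinearMap.toMatrix (b.restrictScalars R) (b.restrictScalars R)
      ((f.restrictScalars R).restrict hf)).map (algebraMap R S) = LinearMap.toMatrix b b f := by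
  ext i j
  simp [LinearMap.toMatrix_apply]

theorem algebraMap_trace_restrict_span [Finite ι] :
    algebraMap R S (LinearMap.trace R _ ((f.restrictScalars R).restrict hf)) =
      LinearMap.trace S M f := by
  classical
  have := Fintype.ofFinite ι
  rw [LinearMap.trace_eq_matrix_trace R (b.restrictScalars R), LinearMap.trace_eq_matrix_trace S b,
    AddMonoidHom.map_trace, map_algebraMap_toMatrix_restrict_span]

theorem algebraMap_det_restrict_span [Finite ι] :
    algebraMap R S (LinearMap.det ((f.restrictScalars R).restrict hf)) = LinearMap.det f := by
  classical
  have := Fintype.ofFinite ι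
  rw [← LinearMap.det_toMatrix (b.restrictScalars R), ← LinearMap.det_toMatrix b, RingHom.map_det,
    RingHom.mapMatrix_apply, map_algebraMap_toMatrix_restrict_span]

end StableSpan

theorem lattice_mul_stable_trace_norm_int_general {R S A ι : Type*} [CommRing R] [IsDomain R]
    [CommRing S] [Nontrivial S] [Algebra R S] [IsTorsionFree R S] [CommRing A] [Module R A]
    [Algebra S A] [IsScalarTower R S A] [Finite ι] (b : Basis ι S A) (a : A)
    (ha : ∀ x ∈ Submodule.span R (Set.range b), a * x ∈ Submodule.span R (Set.range b)) :
    (∃ m : R, Algebra.trace S A a = algebraMap R S m) ∧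
      ∃ m : R, Algebra.norm S a = algebraMap R S m :=
  ⟨⟨_, (algebraMap_trace_restrict_span b (Algebra.lmul S A a) ha).symm⟩,
    ⟨_, (algebraMap_det_restrict_span b (Algebra.lmul S A a) ha).symm⟩⟩

/-- If `Λ = ℤv + ℤw` is a lattice in `ℂ` (with `v, w` linearly independent
over `ℝ`) and `a·Λ ⊆ Λ`, then `2·Re a` and `|a|² = Complex.normSq a` are integers. -/
theorem lattice_mul_stable_trace_norm_int (Λ : AddSubgroup ℂ) (v w : ℂ)
    (hindep : LinearIndependent ℝ ![v, w])
    (hΛ : Λ = AddSubgroup.closure {v, w})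
    (a : ℂ) (ha : ∀ x ∈ Λ, a * x ∈ Λ) :
    (∃ m : ℤ, 2 * a.re = (m : ℝ)) ∧ (∃ m : ℤ, Complex.normSq a = (m : ℝ)) := by
  let b : Basis (Fin 2) ℝ ℂ := basisOfLinearIndependentOfCardEqFinrank hindep (by simp)
  have hspan : (Submodule.span ℤ (Set.range b)).toAddSubgroup = Λ := by
    rw [coe_basisOfLinearIndependentOfCardEqFinrank, Matrix.range_cons_cons_empty,
      Submodule.span_int_eq_addSubgroupClosure, hΛ]
  rw [← Algebra.trace_complex_apply, ← Algebra.norm_complex_apply]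
  exact lattice_mul_stable_trace_norm_int_general b a (by rwa [← hspan] at ha)
end

section
/- Let M be a finite multiset of natural numbers, each of whose elements r satisfies r ≥ 2, and suppose that the sum over r ∈ M of (1 − 1/r), computed in ℚ, equals 2. Then M is equal to one of the four multisets {2,2,2,2}, {3,3,3}, {2,4,4}, {2,3,6}. -/
/-!
Write `S` for the sum of the reciprocals `1 / r` and `n` for the number of indices, so that the
equation reads `S = n - 2`. Since `0 < S ≤ n / 2`, either `n = 4` and the bound is attained, which
forces every index to be `2`, or `n = 3` and `S = 1`. In the latter case either every index is at
least `3`, and `S ≤ n / 3` is attained, or some index is `2` and the other two have reciprocal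
sum `1 / 2`. The same dichotomy settles that pair: either both are at least `4`, and `S ≤ n / 4` is
attained, or one of them is `3` and the other is `6`.
-/

/-- The sum of the reciprocals of the elements of a multiset of natural numbers, through which the
Gauss–Bonnet equation constrains the ramification indices. By the convention `0⁻¹ = 0`, an
element `0` does not contribute. -/
def reciprocalSum (M : Multiset ℕ) : ℚ :=
  (M.map fun r => (r : ℚ)⁻¹).sum

section ReciprocalSum

variable {M : Multiset ℕ} {k r : ℕ}

@[simp]
theorem reciprocalSum_cons (r : ℕ) (M : Multiset ℕ) :
    reciprocalSum (r ::ₘ M) = (r : ℚ)⁻¹ + reciprocalSum M := by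
  simp [reciprocalSum]

@[simp]
theorem reciprocalSum_singleton (r : ℕ) : reciprocalSum {r} = (r : ℚ)⁻¹ := by
  simp [reciprocalSum]

theorem reciprocalSum_nonneg (M : Multiset ℕ) : 0 ≤ reciprocalSum M :=
  Multiset.sum_nonneg <| by simp

theorem reciprocalSum_pos (h0 : 0 ∉ M) (hM : M ≠ 0) : 0 < reciprocalSum M := by
  obtain ⟨r, hr⟩ := Multiset.exists_mem_of_ne_zero hM
  obtain ⟨N, rfl⟩ := Multiset.exists_cons_of_mem hr
  have hr_pos : 0 < r := Nat.pos_of_ne_zero fun h => h0 (h ▸ hr)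
  rw [reciprocalSum_cons]
  have := reciprocalSum_nonneg N
  positivity

theorem one_lt_mul_reciprocalSum (h0 : 0 ∉ M) (hM : 1 < M.card) (hr : r ∈ M) :
    1 < r * reciprocalSum M := by
  have hr_pos : (0 : ℚ) < r := mod_cast Nat.pos_of_ne_zero fun h => h0 (h ▸ hr)
  obtain ⟨N, rfl⟩ := Multiset.exists_cons_of_mem hr
  have hN : N ≠ 0 := by rintro rfl; simp at hM
  have hN_pos := reciprocalSum_pos (fun h => h0 (Multiset.mem_cons_of_mem h)) hN
  rw [reciprocalSum_cons, mul_add, mul_inv_cancel₀ hr_pos.ne']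
  exact lt_add_of_pos_right _ (mul_pos hr_pos hN_pos)

theorem reciprocalSum_le_card_div (hk : 0 < k) (h : ∀ r ∈ M, k ≤ r) :
    reciprocalSum M ≤ M.card / k := by
  have inv_le : ∀ r ∈ M, (r : ℚ)⁻¹ ≤ (k : ℚ)⁻¹ := fun r hr =>
    inv_anti₀ (mod_cast hk) (mod_cast h r hr)
  simpa [div_eq_mul_inv, reciprocalSum] using
    Multiset.sum_le_card_nsmul (M.map fun r => (r : ℚ)⁻¹) (k : ℚ)⁻¹ (by simpa using inv_le)

theorem eq_replicate_of_reciprocalSum_eq_card_div (hk : 0 < k) (h : ∀ r ∈ M, k ≤ r)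
    (hS : reciprocalSum M = M.card / k) : M = Multiset.replicate M.card k := by
  refine Multiset.eq_replicate_of_mem fun r hr => (h r hr).antisymm' ?_
  have hr_pos : 0 < r := hk.trans_le (h r hr)
  obtain ⟨N, rfl⟩ := Multiset.exists_cons_of_mem hr
  have hN : reciprocalSum N ≤ N.card / k :=
    reciprocalSum_le_card_div hk fun s hs => h s (Multiset.mem_cons_of_mem hs)
  have inv_le : (k : ℚ)⁻¹ ≤ (r : ℚ)⁻¹ := by
    rw [reciprocalSum_cons, Multiset.card_cons, Nat.cast_succ, add_div, one_div] at hS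
    linarith
  exact_mod_cast (inv_le_inv₀ (mod_cast hk) (mod_cast hr_pos)).mp inv_le

theorem eq_of_card_eq_two_of_reciprocalSum_eq_half (h0 : 0 ∉ M) (hM : M.card = 2)
    (hS : reciprocalSum M = 1 / 2) : M = {4, 4} ∨ M = {3, 6} := by
  have three_le : ∀ r ∈ M, 3 ≤ r := fun r hr => by
    have hlt := one_lt_mul_reciprocalSum h0 (by lia) hr
    rw [hS, mul_one_div, one_lt_div two_pos] at hlt
    exact_mod_cast hlt
  by_cases h3 : 3 ∈ M
  · right
    obtain ⟨N, rfl⟩ := Multiset.exists_cons_of_mem h3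
    obtain ⟨s, rfl⟩ := Multiset.card_eq_one.mp (by simpa using hM)
    have hs : (s : ℚ)⁻¹ = 6⁻¹ := by
      rw [reciprocalSum_cons, reciprocalSum_singleton] at hS
      push_cast at hS ⊢
      linarith
    obtain rfl : s = 6 := by exact_mod_cast inv_injective hs
    rfl
  · left
    have four_le : ∀ r ∈ M, 4 ≤ r := fun r hr =>
      (three_le r hr).lt_of_ne fun h => h3 (h ▸ hr)
    have := eq_replicate_of_reciprocalSum_eq_card_div four_pos four_le (by rw [hS, hM]; norm_num)
    rwa [hM] at this

theorem eq_of_card_eq_three_of_reciprocalSum_eq_one (h0 : 0 ∉ M) (hM : M.card = 3)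
    (hS : reciprocalSum M = 1) : M = {3, 3, 3} ∨ M = {2, 4, 4} ∨ M = {2, 3, 6} := by
  have two_le : ∀ r ∈ M, 2 ≤ r := fun r hr => by
    have hlt := one_lt_mul_reciprocalSum h0 (by lia) hr
    rw [hS, mul_one] at hlt
    exact_mod_cast hlt
  by_cases h2 : 2 ∈ M
  · right
    obtain ⟨N, rfl⟩ := Multiset.exists_cons_of_mem h2
    have hN : reciprocalSum N = 1 / 2 := by
      rw [reciprocalSum_cons] at hS
      push_cast at hS ⊢
      linarith
    exact (eq_of_card_eq_two_of_reciprocalSum_eq_half (fun h => h0 (Multiset.mem_cons_of_mem h))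
      (by simpa using hM) hN).imp (congrArg (2 ::ₘ ·)) (congrArg (2 ::ₘ ·))
  · left
    have three_le : ∀ r ∈ M, 3 ≤ r := fun r hr =>
      (two_le r hr).lt_of_ne fun h => h2 (h ▸ hr)
    have := eq_replicate_of_reciprocalSum_eq_card_div three_pos three_le
      (by rw [hS, hM]; norm_num)
    rwa [hM] at this

end ReciprocalSum

/-- Corollary 4.5: a finite multiset of integers `r ≥ 2` with
`Σ (1 − 1/r) = 2` (in `ℚ`) is `{2,2,2,2}`, `{3,3,3}`, `{2,4,4}`, or `{2,3,6}`. -/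
theorem ramification_multisets (M : Multiset ℕ) (h2 : ∀ r ∈ M, 2 ≤ r)
    (hsum : (M.map (fun r => 1 - 1 / (r : ℚ))).sum = 2) :
    M = {2, 2, 2, 2} ∨ M = {3, 3, 3} ∨ M = {2, 4, 4} ∨ M = {2, 3, 6} := by
  have h0 : 0 ∉ M := fun h => by simpa using h2 0 h
  -- Lean elaborates `M.map` in `hsum` with `M` coerced to a `Multiset ℚ` by the multiset monad.
  have hS : (M.card : ℚ) - reciprocalSum M = 2 := by
    simpa [reciprocalSum, Multiset.sum_map_sub] using hsum
  have hM : M ≠ 0 := by rintro rfl; simp at hsum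
  have card_gt : 2 < M.card := by
    have := reciprocalSum_pos h0 hM
    exact_mod_cast (by linarith : (2 : ℚ) < M.card)
  have card_le : M.card ≤ 4 := by
    have := reciprocalSum_le_card_div two_pos h2
    push_cast at this
    exact_mod_cast (by linarith : (M.card : ℚ) ≤ 4)
  obtain hcard | hcard : M.card = 3 ∨ M.card = 4 := by lia
  · have hS_one : reciprocalSum M = 1 := by
      rw [hcard] at hS
      push_cast at hS
      linarith
    exact .inr <| eq_of_card_eq_three_of_reciprocalSum_eq_one h0 hcard hS_one
  · have hS_max : reciprocalSum M = M.card / (2 : ℕ) := by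
      rw [hcard] at hS ⊢
      push_cast at hS ⊢
      linarith
    have := eq_replicate_of_reciprocalSum_eq_card_div two_pos h2 hS_max
    exact .inl <| by rwa [hcard] at this
end

section
/- Let M be a finite multiset of elements of ℕ∞ = ℕ ∪ {∞}, each of whose elements r satisfies r ≥ 2, and suppose that the sum over r ∈ M of (1 − 1/r), computed in ℝ with the convention 1/∞ = 0, equals 2. Then M is equal to one of the six multisets {2,2,2,2}, {3,3,3}, {2,4,4}, {2,3,6}, {∞,∞}, {2,2,∞}. -/
/-!
The condition says that the reciprocals `1/r` add up to `card M - 2`. Each of them lies between `0`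
and `1/2`, so `M` has between two and four elements. At both ends the bound is attained by every
element: two elements must both be `∞`, and four must all be `2`. For three elements
`1/a + 1/b + 1/c = 1` with `a ≤ b ≤ c`, which forces `a ≤ 3`, and `b ≤ 4` when `a = 2`.
-/

/-- The real number `1/r` for `r : ℕ∞`, with `1/∞ = 0`; this convention comes from `⊤.toNat = 0` and
`0⁻¹ = 0` in `ℝ`, which also give the junk value `realInv 0 = 0`. -/
noncomputable def realInv (r : ℕ∞) : ℝ := (r.toNat : ℝ)⁻¹

@[simp]
lemma realInv_top : realInv ⊤ = 0 := by simp [realInv]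

@[simp]
lemma realInv_natCast (n : ℕ) : realInv n = (n : ℝ)⁻¹ := by simp [realInv]

@[simp]
lemma realInv_ofNat (n : ℕ) [n.AtLeastTwo] : realInv ofNat(n) = (ofNat(n) : ℝ)⁻¹ :=
  realInv_natCast n

lemma realInv_nonneg (r : ℕ∞) : 0 ≤ realInv r := inv_nonneg.2 (Nat.cast_nonneg _)

lemma realInv_strictAntiOn : StrictAntiOn realInv (Set.Ioi 0) := by
  intro r (hr : 0 < r) s _ hrs
  lift r to ℕ using hrs.ne_top
  have hr' : (0 : ℝ) < r := by exact_mod_cast hr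
  cases s with
  | top => simpa using hr'
  | coe s =>
    rw [realInv_natCast, realInv_natCast]
    exact inv_strictAnti₀ hr' (by exact_mod_cast hrs)

section

variable {r s : ℕ∞}

lemma realInv_le_realInv_iff (hr : 0 < r) (hs : 0 < s) : realInv r ≤ realInv s ↔ s ≤ r :=
  realInv_strictAntiOn.le_iff_ge hr hs

lemma realInv_inj (hr : 0 < r) (hs : 0 < s) : realInv r = realInv s ↔ r = s :=
  realInv_strictAntiOn.injOn.eq_iff hr hs

lemma realInv_le_half (hr : 2 ≤ r) : realInv r ≤ 2⁻¹ := by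
  simpa using (realInv_le_realInv_iff (two_pos.trans_le hr) two_pos).2 hr

end

section

variable {a b c : ℕ∞}

lemma eq_of_realInv_add_eq_half (hb : 0 < b) (hbc : b ≤ c) (h : realInv b + realInv c = 2⁻¹) :
    b = 2 ∧ c = ⊤ ∨ b = 3 ∧ c = 6 ∨ b = 4 ∧ c = 4 := by
  have hc : 0 < c := hb.trans_le hbc
  have hcb : realInv c ≤ realInv b := (realInv_le_realInv_iff hc hb).2 hbc
  have hb4 : b ≤ 4 := by
    rw [← realInv_le_realInv_iff four_pos hb, realInv_ofNat]
    linarith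
  have eq_c {s : ℕ∞} (hs : 0 < s) (hbs : realInv b + realInv s = 2⁻¹) : c = s :=
    (realInv_inj hc hs).1 (by linarith)
  lift b to ℕ using ne_top_of_le_ne_top (ENat.natCast_ne_top 4) hb4
  norm_cast at hb hb4
  interval_cases b
  · rw [realInv_natCast, Nat.cast_one, inv_one] at h
    linarith [realInv_nonneg c]
  · exact .inl ⟨rfl, eq_c ENat.top_pos (by norm_num)⟩
  · exact .inr (.inl ⟨rfl, eq_c (by norm_num) (by norm_num)⟩)
  · exact .inr (.inr ⟨rfl, eq_c four_pos (by norm_num)⟩)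

lemma eq_of_realInv_add_add_eq_one (ha : 2 ≤ a) (hab : a ≤ b) (hbc : b ≤ c)
    (h : realInv a + realInv b + realInv c = 1) :
    a = 3 ∧ b = 3 ∧ c = 3 ∨
      a = 2 ∧ (b = 2 ∧ c = ⊤ ∨ b = 3 ∧ c = 6 ∨ b = 4 ∧ c = 4) := by
  have ha0 : 0 < a := two_pos.trans_le ha
  have hb0 : 0 < b := ha0.trans_le hab
  have hc0 : 0 < c := hb0.trans_le hbc
  have hba : realInv b ≤ realInv a := (realInv_le_realInv_iff hb0 ha0).2 hab
  have hcb : realInv c ≤ realInv b := (realInv_le_realInv_iff hc0 hb0).2 hbc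
  have ha3 : a ≤ 3 := by
    rw [← realInv_le_realInv_iff three_pos ha0, realInv_ofNat]
    linarith
  obtain rfl | ha2 := ha.eq_or_lt
  · rw [realInv_ofNat] at h
    exact .inr ⟨rfl, eq_of_realInv_add_eq_half hb0 hbc (by linarith)⟩
  · obtain rfl : a = 3 := ha3.antisymm (Order.add_one_le_of_lt ha2)
    rw [realInv_ofNat] at h hba
    have hb : b = 3 := (realInv_inj hb0 three_pos).1 (by rw [realInv_ofNat]; linarith)
    have hc : c = 3 := (realInv_inj hc0 three_pos).1 (by rw [realInv_ofNat]; linarith)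
    exact .inl ⟨rfl, hb, hc⟩

end

lemma exists_le_le_eq_of_card_eq_three {α : Type*} [LinearOrder α] {M : Multiset α}
    (hM : M.card = 3) : ∃ a b c, a ≤ b ∧ b ≤ c ∧ M = {a, b, c} := by
  obtain ⟨a, b, c, habc⟩ := List.length_eq_three.1 ((Multiset.length_sort (· ≤ ·)).trans hM)
  have hsorted := M.pairwise_sort (· ≤ ·)
  rw [habc] at hsorted
  refine ⟨a, b, c, hsorted.rel_head (by simp), hsorted.of_cons.rel_head (by simp), ?_⟩
  rw [← M.sort_eq (· ≤ ·), habc]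
  rfl

lemma sum_map_one_sub {α R : Type*} [AddCommGroupWithOne R] (M : Multiset α) (f : α → R) :
    (M.map fun x => 1 - f x).sum = M.card - (M.map f).sum := by
  simp [Multiset.sum_map_sub]

lemma eq_replicate_of_sum_map_eq_zero {α R : Type*} [AddCommMonoid R] [PartialOrder R]
    [IsOrderedAddMonoid R] {M : Multiset α} {f : α → R} {a : α}
    (hf : ∀ x ∈ M, 0 ≤ f x) (ha : ∀ x ∈ M, f x = 0 → x = a) (hsum : (M.map f).sum = 0) :
    M = Multiset.replicate M.card a := by
  have hzero : ∀ y ∈ M.map f, y = 0 :=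
    Multiset.all_zero_of_le_zero_le_of_sum_eq_zero (by simpa using hf) hsum
  exact Multiset.eq_replicate_card.2 fun x hx => ha x hx (hzero _ (Multiset.mem_map_of_mem f hx))

section

variable {M : Multiset ℕ∞}

lemma sum_map_realInv_nonneg (M : Multiset ℕ∞) : 0 ≤ (M.map realInv).sum :=
  Multiset.sum_nonneg (by simp [realInv_nonneg])

lemma sum_map_realInv_le (hM : ∀ r ∈ M, 2 ≤ r) : (M.map realInv).sum ≤ M.card * 2⁻¹ := by
  simpa using Multiset.sum_map_le_sum_map realInv (fun _ => 2⁻¹) fun r hr =>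
    realInv_le_half (hM r hr)

lemma eq_replicate_top_of_sum_map_realInv_eq_zero (hM : ∀ r ∈ M, 0 < r)
    (hsum : (M.map realInv).sum = 0) : M = Multiset.replicate M.card ⊤ :=
  eq_replicate_of_sum_map_eq_zero (fun r _ => realInv_nonneg r)
    (fun r hr h => (realInv_inj (hM r hr) ENat.top_pos).1 (h.trans realInv_top.symm)) hsum

lemma eq_replicate_two_of_sum_map_realInv_eq (hM : ∀ r ∈ M, 2 ≤ r)
    (hsum : (M.map realInv).sum = M.card * 2⁻¹) : M = Multiset.replicate M.card 2 := by
  refine eq_replicate_of_sum_map_eq_zero (f := fun r => 2⁻¹ - realInv r)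
    (fun r hr => sub_nonneg.2 (realInv_le_half (hM r hr))) (fun r hr h => ?_) ?_
  · refine (realInv_inj (two_pos.trans_le (hM r hr)) two_pos).1 ?_
    rw [realInv_ofNat]
    linarith
  · simp [Multiset.sum_map_sub, hsum]

lemma eq_of_card_eq_three_of_sum_map_realInv_eq_one (hM : ∀ r ∈ M, 2 ≤ r) (hcard : M.card = 3)
    (hsum : (M.map realInv).sum = 1) :
    M = {3, 3, 3} ∨ M = {2, 4, 4} ∨ M = {2, 3, 6} ∨ M = {2, 2, ⊤} := by
  obtain ⟨a, b, c, hab, hbc, rfl⟩ := exists_le_le_eq_of_card_eq_three hcard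
  have habc : realInv a + realInv b + realInv c = 1 := by simpa [add_assoc] using hsum
  rcases eq_of_realInv_add_add_eq_one (hM a (by simp)) hab hbc habc with
    ⟨rfl, rfl, rfl⟩ | ⟨rfl, ⟨rfl, rfl⟩ | ⟨rfl, rfl⟩ | ⟨rfl, rfl⟩⟩ <;> simp

end

/-- Remark 4.7: a finite multiset of elements `r ∈ ℕ∞` with `r ≥ 2` and
`Σ (1 − 1/r) = 2` (in `ℝ`, with the convention `1/∞ = 0`) is one of
`{2,2,2,2}`, `{3,3,3}`, `{2,4,4}`, `{2,3,6}`, `{∞,∞}`, `{2,2,∞}`. -/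
theorem ramification_multisets_with_top (M : Multiset ℕ∞) (h2 : ∀ r ∈ M, 2 ≤ r)
    (hsum : (M.map (fun r : ℕ∞ => match r with
      | ⊤ => (1 : ℝ)
      | (n : ℕ) => 1 - 1 / (n : ℝ))).sum = 2) :
    M = {2, 2, 2, 2} ∨ M = {3, 3, 3} ∨ M = {2, 4, 4} ∨ M = {2, 3, 6} ∨
      M = {⊤, ⊤} ∨ M = {2, 2, ⊤} := by
  have hweight : (M.map fun r => 1 - realInv r).sum = 2 := by
    rw [← hsum]
    congr 2 with r
    cases r with
    | top => exact (congrArg (1 - ·) realInv_top).trans (sub_zero 1)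
    | coe n => simp
  have hinv : (M.map realInv).sum = M.card - 2 := by linarith [sum_map_one_sub M realInv]
  have hcard_ge : 2 ≤ M.card := by
    exact_mod_cast (by linarith [sum_map_realInv_nonneg M] : (2 : ℝ) ≤ M.card)
  have hcard_le : M.card ≤ 4 := by
    exact_mod_cast (by linarith [sum_map_realInv_le h2] : (M.card : ℝ) ≤ 4)
  obtain hcard | hcard | hcard : M.card = 2 ∨ M.card = 3 ∨ M.card = 4 := by omega
  · have hM := eq_replicate_top_of_sum_map_realInv_eq_zero (fun r hr => two_pos.trans_le (h2 r hr))
      (by rw [hinv, hcard]; norm_num)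
    rw [hcard] at hM
    exact .inr (.inr (.inr (.inr (.inl hM))))
  · have hM := eq_of_card_eq_three_of_sum_map_realInv_eq_one h2 hcard
      (by rw [hinv, hcard]; norm_num)
    tauto
  · have hM := eq_replicate_two_of_sum_map_realInv_eq h2 (by rw [hinv, hcard]; norm_num)
    rw [hcard] at hM
    exact .inl hM
end

section
/- Let Λ be a lattice in ℂ and let ω ∈ ℂ with ω ≠ 1 and ωΛ = Λ. Then the map x ↦ (1−ω)·x induces an isomorphism of additive groups from the subgroup of the torus ℂ/Λ consisting of elements fixed by multiplication by ω (that is, {x ∈ ℂ/Λ : ω·x = x}) onto the quotient group Λ/(1−ω)Λ. -/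
/-- Multiplication by `ω` on the torus `ℂ/Λ`, induced when `ωΛ ⊆ Λ`. -/
noncomputable def torusMul (Λ : AddSubgroup ℂ) (ω : ℂ) (h : ∀ x ∈ Λ, ω * x ∈ Λ) :
    ℂ ⧸ Λ →+ ℂ ⧸ Λ :=
  QuotientAddGroup.map Λ Λ (AddMonoidHom.mulLeft ω) h

/-- The subgroup of the torus `ℂ/Λ` fixed by multiplication by `ω`. -/
noncomputable def torusFixed (Λ : AddSubgroup ℂ) (ω : ℂ) (h : ∀ x ∈ Λ, ω * x ∈ Λ) :
    AddSubgroup (ℂ ⧸ Λ) :=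
  AddMonoidHom.ker (torusMul Λ ω h - AddMonoidHom.id _)

/-- The subgroup `c·Λ` of `Λ`. -/
noncomputable def subLattice (Λ : AddSubgroup ℂ) (c : ℂ) : AddSubgroup Λ :=
  (AddSubgroup.map (AddMonoidHom.mulLeft c) Λ).comap Λ.subtype

/-!
On `ℂ/Λ`, being fixed by `ω` means being killed by `1 - ω`. Multiplication by `1 - ω` is an
automorphism `φ` of `ℂ` with `φΛ ⊆ Λ`, so the snake lemma for `φ` acting on `0 → Λ → ℂ → ℂ/Λ → 0`
identifies the kernel of `φ` on `ℂ/Λ` with the cokernel `Λ/φΛ` of `φ` on `Λ`.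
-/

section KernelOfQuotientMap

variable {A B : Type*} [AddCommGroup A] [AddCommGroup B]
  (φ : A ≃+ B) (N : AddSubgroup A) (M : AddSubgroup B) (h : N ≤ M.comap φ.toAddMonoidHom)

/-- The homomorphism `m ↦ φ⁻¹ m + N` from `M` to the kernel of the map `A/N → B/M` induced by an
isomorphism `φ` with `φ N ⊆ M`. It induces the inverse of the connecting map of the snake lemma. -/
def toKerQuotientMap : M →+ (QuotientAddGroup.map N M φ.toAddMonoidHom h).ker :=
  ((QuotientAddGroup.mk' N).comp (φ.symm.toAddMonoidHom.comp M.subtype)).codRestrict _ fun m => by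
    rw [AddMonoidHom.mem_ker, AddMonoidHom.comp_apply, QuotientAddGroup.mk'_apply,
      QuotientAddGroup.map_mk, QuotientAddGroup.eq_zero_iff]
    simp

@[simp]
theorem coe_toKerQuotientMap (m : M) :
    (toKerQuotientMap φ N M h m : A ⧸ N) = (φ.symm m : A) :=
  rfl

theorem toKerQuotientMap_apply (a : A) (ha : φ a ∈ M)
    (hmem : (a : A ⧸ N) ∈ (QuotientAddGroup.map N M φ.toAddMonoidHom h).ker) :
    toKerQuotientMap φ N M h ⟨φ a, ha⟩ = ⟨a, hmem⟩ :=
  Subtype.ext <| by rw [coe_toKerQuotientMap, φ.symm_apply_apply]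

theorem ker_toKerQuotientMap :
    (toKerQuotientMap φ N M h).ker = (N.map φ.toAddMonoidHom).addSubgroupOf M := by
  ext m
  rw [AddMonoidHom.mem_ker, ← ZeroMemClass.coe_eq_zero, coe_toKerQuotientMap,
    QuotientAddGroup.eq_zero_iff, AddSubgroup.mem_addSubgroupOf, AddSubgroup.mem_map_equiv]

theorem toKerQuotientMap_surjective : Function.Surjective (toKerQuotientMap φ N M h) := by
  rintro ⟨y, hy⟩
  induction y using QuotientAddGroup.induction_on with
  | H a =>
    have ha : φ a ∈ M := (QuotientAddGroup.eq_zero_iff (φ a)).1 hy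
    exact ⟨⟨φ a, ha⟩, toKerQuotientMap_apply φ N M h a ha hy⟩

/-- The isomorphism `ker (A/N → B/M) ≃ M/φN`, `a + N ↦ φ a + φN`, for an isomorphism `φ : A ≃ B`
with `φ N ⊆ M`. -/
noncomputable def kerQuotientMapEquiv :
    (QuotientAddGroup.map N M φ.toAddMonoidHom h).ker ≃+
      M ⧸ (N.map φ.toAddMonoidHom).addSubgroupOf M :=
  ((QuotientAddGroup.quotientAddEquivOfEq (ker_toKerQuotientMap φ N M h).symm).trans
    (QuotientAddGroup.quotientKerEquivOfSurjective _ (toKerQuotientMap_surjective φ N M h))).symm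

theorem kerQuotientMapEquiv_mk (a : A) (ha : φ a ∈ M)
    (hmem : (a : A ⧸ N) ∈ (QuotientAddGroup.map N M φ.toAddMonoidHom h).ker) :
    kerQuotientMapEquiv φ N M h ⟨a, hmem⟩ = (⟨φ a, ha⟩ : M) := by
  rw [kerQuotientMapEquiv, AddEquiv.symm_apply_eq]
  exact (toKerQuotientMap_apply φ N M h a ha hmem).symm

end KernelOfQuotientMap

theorem one_sub_mul_mem {R : Type*} [NonAssocRing R] {Λ : AddSubgroup R} {ω : R}
    (h : ∀ x ∈ Λ, ω * x ∈ Λ) {x : R} (hx : x ∈ Λ) : (1 - ω) * x ∈ Λ := by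
  rw [one_sub_mul]
  exact Λ.sub_mem hx (h x hx)

theorem torusMul_one_sub (Λ : AddSubgroup ℂ) (ω : ℂ) (h : ∀ x ∈ Λ, ω * x ∈ Λ) :
    torusMul Λ (1 - ω) (fun _ => one_sub_mul_mem h) = AddMonoidHom.id _ - torusMul Λ ω h := by
  ext t
  exact congrArg (QuotientAddGroup.mk : ℂ → ℂ ⧸ Λ) (one_sub_mul ω t)

theorem torusFixed_eq_ker_torusMul_one_sub (Λ : AddSubgroup ℂ) (ω : ℂ)
    (h : ∀ x ∈ Λ, ω * x ∈ Λ) :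
    torusFixed Λ ω h = (torusMul Λ (1 - ω) fun _ => one_sub_mul_mem h).ker := by
  ext x
  rw [torusFixed, torusMul_one_sub, AddMonoidHom.mem_ker, AddMonoidHom.mem_ker,
    AddMonoidHom.sub_apply, AddMonoidHom.sub_apply, sub_eq_zero, sub_eq_zero, eq_comm]

theorem torus_fixed_points_iso_general (Λ : AddSubgroup ℂ) (ω : ℂ) (hω1 : ω ≠ 1)
    (hsub : ∀ x ∈ Λ, ω * x ∈ Λ) :
    ∃ e : torusFixed Λ ω hsub ≃+ Λ ⧸ subLattice Λ (1 - ω),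
      ∀ (t : ℂ) (ht : (1 - ω) * t ∈ Λ)
        (hmem : (QuotientAddGroup.mk t : ℂ ⧸ Λ) ∈ torusFixed Λ ω hsub),
        e ⟨QuotientAddGroup.mk t, hmem⟩ =
          QuotientAddGroup.mk (⟨(1 - ω) * t, ht⟩ : Λ) := by
  let φ : ℂ ≃+ ℂ := AddAut.mulLeft (Units.mk0 (1 - ω) (sub_ne_zero.2 hω1.symm))
  have hφ : Λ ≤ Λ.comap φ.toAddMonoidHom := fun _ => one_sub_mul_mem hsub
  have fixed_eq_ker := torusFixed_eq_ker_torusMul_one_sub Λ ω hsub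
  exact ⟨(AddEquiv.addSubgroupCongr fixed_eq_ker).trans (kerQuotientMapEquiv φ Λ Λ hφ),
    fun t ht hmem => kerQuotientMapEquiv_mk φ Λ Λ hφ t ht (fixed_eq_ker ▸ hmem)⟩

/-- Lemma 5.3: if `Λ = ℤv + ℤw` is a lattice in `ℂ`, `ω ≠ 1` and
`ωΛ = Λ`, then `x ↦ (1−ω)x` induces an additive isomorphism from the subgroup
`{x ∈ ℂ/Λ : ω·x = x}` of the torus onto the quotient group `Λ/(1−ω)Λ`. -/
theorem torus_fixed_points_iso (Λ : AddSubgroup ℂ) (v w : ℂ)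
    (hindep : LinearIndependent ℝ ![v, w])
    (hΛ : Λ = AddSubgroup.closure {v, w})
    (ω : ℂ) (hω1 : ω ≠ 1)
    (hω : AddSubgroup.map (AddMonoidHom.mulLeft ω) Λ = Λ)
    (hsub : ∀ x ∈ Λ, ω * x ∈ Λ) :
    ∃ e : torusFixed Λ ω hsub ≃+ Λ ⧸ subLattice Λ (1 - ω),
      ∀ (t : ℂ) (ht : (1 - ω) * t ∈ Λ)
        (hmem : (QuotientAddGroup.mk t : ℂ ⧸ Λ) ∈ torusFixed Λ ω hsub),
        e ⟨QuotientAddGroup.mk t, hmem⟩ =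
          QuotientAddGroup.mk (⟨(1 - ω) * t, ht⟩ : Λ) := by
  exact torus_fixed_points_iso_general Λ ω hω1 hsub
end

section
/- Let Λ be a lattice in ℂ, let ω ∈ ℂ be a root of unity (ωⁿ = 1 for some n ≥ 1), let a ∈ ℂ with a ≠ 0, and let b ∈ ℂ. Then the following are equivalent: (i) for every t ∈ ℂ there exists k ∈ ℕ with aωt + b − ω^k(at + b) ∈ Λ; (ii) (1−ω)·b ∈ Λ. -/
/-!
Write `L t = A t + b`. For fixed `k` with `ω ^ k ≠ ω`, the map `t ↦ L (ω t) - ω ^ k L t` is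
injective, so it takes values in the countable set `Λ` for only countably many `t`. Countably many
exponents therefore cannot account for all `t`, so some `k` that does occur has `ω ^ k = ω`. For
that `k` the linear part of `L` cancels, and the difference is `(1 - ω) b` for every `t`.
-/

theorem countable_addSubgroupClosure {G : Type*} [AddCommGroup G] {s : Set G} (hs : s.Countable) :
    (AddSubgroup.closure s : Set G).Countable := by
  have : Countable s := hs.to_subtype
  have hspan : Countable (Submodule.span ℤ (Set.range ((↑) : s → G))) := inferInstance
  rw [Subtype.range_coe] at hspan
  rw [← Submodule.span_int_eq_addSubgroupClosure]
  exact hspan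

theorem exists_mem_and_not_injective {ι α β : Type*} [Countable ι] [Uncountable α]
    {s : Set β} (hs : s.Countable) {f : ι → α → β} (hf : ∀ x, ∃ i, f i x ∈ s) :
    ∃ i x, f i x ∈ s ∧ ¬ Function.Injective (f i) := by
  by_contra! hinj
  have hpreimage (i : ι) : (f i ⁻¹' s).Countable := by
    obtain hempty | ⟨x, hx⟩ := (f i ⁻¹' s).eq_empty_or_nonempty
    · exact hempty ▸ Set.countable_empty
    · exact hs.preimage (hinj i x hx)
  have hcover : ⋃ i, f i ⁻¹' s = Set.univ := Set.iUnion_eq_univ_iff.mpr hf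
  exact Set.not_countable_univ (hcover ▸ Set.countable_iUnion hpreimage)

section AffineMap

variable {R M N : Type*} [Ring R] [AddCommGroup M] [Module R M] [AddCommGroup N] [Module R N]

theorem map_smul_add_sub_smul (A : M →ₗ[R] N) (b : N) (ω c : R) (t : M) :
    A (ω • t) + b - c • (A t + b) = A ((ω - c) • t) + (1 - c) • b := by
  simp only [sub_smul, map_sub, map_smul, smul_add, one_smul]
  abel

theorem map_smul_add_sub_smul_self (A : M →ₗ[R] N) (b : N) (ω : R) (t : M) :
    A (ω • t) + b - ω • (A t + b) = (1 - ω) • b := by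
  rw [map_smul_add_sub_smul, sub_self, zero_smul, map_zero, zero_add]

variable [IsCancelMulZero R] [Module.IsTorsionFree R M]

theorem map_smul_add_sub_smul_injective {A : M →ₗ[R] N} (hA : Function.Injective A) (b : N)
    {ω c : R} (hc : c ≠ ω) :
    Function.Injective fun t ↦ A (ω • t) + b - c • (A t + b) := by
  simp only [map_smul_add_sub_smul]
  exact (add_left_injective _).comp (hA.comp (smul_right_injective M (sub_ne_zero.mpr hc.symm)))

variable [Uncountable M]

theorem one_sub_smul_mem_of_forall_exists_mem {ι : Type*} [Countable ι] {Λ : Set N}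
    (hΛ : Λ.Countable) {A : M →ₗ[R] N} (hA : Function.Injective A) {b : N} {ω : R} {c : ι → R}
    (h : ∀ t, ∃ i, A (ω • t) + b - c i • (A t + b) ∈ Λ) : (1 - ω) • b ∈ Λ := by
  obtain ⟨i, t, hmem, hninj⟩ := exists_mem_and_not_injective hΛ h
  have hc : c i = ω := by
    by_contra hc
    exact hninj (map_smul_add_sub_smul_injective hA b hc)
  rwa [hc, map_smul_add_sub_smul_self] at hmem

theorem affine_descends_iff_general {Λ : Set N} (hΛ : Λ.Countable) {A : M →ₗ[R] N}
    (hA : Function.Injective A) (b : N) (ω : R) :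
    (∀ t, ∃ k : ℕ, A (ω • t) + b - ω ^ k • (A t + b) ∈ Λ) ↔ (1 - ω) • b ∈ Λ := by
  refine ⟨one_sub_smul_mem_of_forall_exists_mem hΛ hA, fun h t ↦ ⟨1, ?_⟩⟩
  rwa [pow_one, map_smul_add_sub_smul_self]

end AffineMap

/-- end of the proof of Theorem 3.1: for a lattice `Λ = ℤv + ℤw` in `ℂ`,
a root of unity `ω`, `a ≠ 0` and `b ∈ ℂ`, the affine map `L(t) = at + b` descends to the
quotient of the torus by `t ↦ ωt` — i.e. for every `t` there is `k` with
`aωt + b − ω^k(at + b) ∈ Λ` — if and only if `(1−ω)·b ∈ Λ`. -/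
theorem affine_descends_iff (Λ : AddSubgroup ℂ) (v w : ℂ)
    (hindep : LinearIndependent ℝ ![v, w])
    (hΛ : Λ = AddSubgroup.closure {v, w})
    (ω : ℂ) (n : ℕ) (hn : 1 ≤ n) (hωn : ω ^ n = 1)
    (a : ℂ) (ha : a ≠ 0) (b : ℂ) :
    (∀ t : ℂ, ∃ k : ℕ, a * ω * t + b - ω ^ k * (a * t + b) ∈ Λ) ↔ (1 - ω) * b ∈ Λ := by
  have : Uncountable ℂ := Set.not_countable_univ_iff.mp not_countable_complex
  have hcount : (Λ : Set ℂ).Countable :=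
    hΛ ▸ countable_addSubgroupClosure (Set.toFinite {v, w}).countable
  have hinj : Function.Injective (LinearMap.mulLeft ℂ a) := mul_right_injective₀ ha
  simpa only [LinearMap.mulLeft_apply, smul_eq_mul, mul_assoc, SetLike.mem_coe] using
    affine_descends_iff_general hcount hinj b ω
end

section
/- Let n ≥ 2 be an integer, let ω = exp(2πi/n), and let Λ be a lattice in ℂ with ωΛ = Λ. Then the set of points of the torus ℂ/Λ fixed by multiplication by ω, namely {x ∈ ℂ/Λ : ω·x = x}, is finite with exactly 4·sin²(π/n) elements. -/
/-!
A point `z + Λ` is fixed by `ω` exactly when `(ω - 1) z ∈ Λ`, so the fixed points are the kernel of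
multiplication by `ω - 1` on `ℂ/Λ`, that is, the quotient of the lattice `(ω - 1)⁻¹Λ` by `Λ`. Its
order is an index of lattices, given by the real determinant of multiplication by `ω - 1`, and this
determinant is `|ω - 1|²`.
-/

theorem natCard_ker_quotientAddGroup_map {G H : Type*} [AddGroup G] [AddGroup H]
    (N : AddSubgroup G) [N.Normal] (M : AddSubgroup H) [M.Normal] (f : G →+ H)
    (h : N ≤ M.comap f) :
    Nat.card (QuotientAddGroup.map N M f h).ker = N.relIndex (M.comap f) := by
  rw [QuotientAddGroup.ker_map, ← AddSubgroup.relIndex_ker, QuotientAddGroup.ker_mk']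

theorem comap_addEquiv_closure {G H : Type*} [AddGroup G] [AddGroup H] (e : G ≃+ H) (s : Set H) :
    (AddSubgroup.closure s).comap (e : G →+ H) = AddSubgroup.closure (e.symm '' s) :=
  (AddSubgroup.comap_equiv_eq_map_symm e _).trans (AddMonoidHom.map_closure _ s)

section Lattice

variable {R E ι : Type*} [CommRing R] [LinearOrder R] [IsStrictOrderedRing R]
  [AddCommGroup E] [Module R E]

theorem relIndex_closure_range_basis_eq_abs_det [Fintype ι] [DecidableEq ι]
    (b₁ b₂ : Module.Basis ι R E)
    (h : AddSubgroup.closure (Set.range b₁) ≤ AddSubgroup.closure (Set.range b₂)) :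
    ((AddSubgroup.closure (Set.range b₁)).relIndex (AddSubgroup.closure (Set.range b₂)) : R) =
      |b₂.det b₁| := by
  rw [AddSubgroup.relIndex_eq_natAbs_det _ _ h (b₁.addSubgroupOfClosure _ rfl)
    (b₂.addSubgroupOfClosure _ rfl), Nat.cast_natAbs, Int.cast_abs, ← eq_intCast (algebraMap ℤ R),
    Module.Basis.det_apply, Module.Basis.det_apply, RingHom.map_det]
  congr
  ext i j
  simp only [Module.Basis.toMatrix_apply, RingHom.mapMatrix_apply, Matrix.map_apply,
    Module.Basis.addSubgroupOfClosure_apply]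
  exact Module.Basis.addSubgroupOfClosure_repr_apply ..

theorem natCard_ker_lattice_quotient_map_eq_abs_det [Finite ι] (b : Module.Basis ι R E)
    (e : E ≃ₗ[R] E) {L : AddSubgroup E} (hL : L = AddSubgroup.closure (Set.range b))
    (h : L ≤ L.comap (e : E →+ E)) :
    (Nat.card (QuotientAddGroup.map L L (e : E →+ E) h).ker : R) =
      |LinearMap.det (e : E →ₗ[R] E)| := by
  classical
  have := Fintype.ofFinite ι
  subst hL
  have hcomap : (AddSubgroup.closure (Set.range b)).comap (e : E →+ E) =
      AddSubgroup.closure (Set.range (b.map e.symm)) :=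
    (comap_addEquiv_closure e.toAddEquiv _).trans
      (congrArg AddSubgroup.closure (Set.range_comp e.symm b).symm)
  rw [natCard_ker_quotientAddGroup_map]
  rw [hcomap] at h ⊢
  calc
    _ = |(b.map e.symm).det b| := relIndex_closure_range_basis_eq_abs_det b (b.map e.symm) h
    _ = |b.det ((e : E →ₗ[R] E) ∘ b)| := by rw [Module.Basis.det_map]; rfl
    _ = |LinearMap.det (e : E →ₗ[R] E)| := by
      rw [Module.Basis.det_comp, Module.Basis.det_self, mul_one]

end Lattice

section Torus

variable {Λ : AddSubgroup ℂ}

theorem natCard_ker_torusMul {α : ℂ} (hα : α ≠ 0) {v w : ℂ}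
    (hindep : LinearIndependent ℝ ![v, w]) (hΛ : Λ = AddSubgroup.closure {v, w})
    (h : ∀ x ∈ Λ, α * x ∈ Λ) :
    (Nat.card (torusMul Λ α h).ker : ℝ) = ‖α‖ ^ 2 := by
  let b := basisOfLinearIndependentOfCardEqFinrank hindep (by simp)
  let e : ℂ ≃ₗ[ℝ] ℂ := (LinearEquiv.smulOfNeZero ℂ ℂ α hα).restrictScalars ℝ
  have hΛb : Λ = AddSubgroup.closure (Set.range b) := by
    rw [hΛ, coe_basisOfLinearIndependentOfCardEqFinrank, Matrix.range_cons_cons_empty]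
  have hdet : LinearMap.det (e : ℂ →ₗ[ℝ] ℂ) = ‖α‖ ^ 2 :=
    (Algebra.norm_complex_apply α).trans (Complex.normSq_eq_norm_sq α)
  have hcard := natCard_ker_lattice_quotient_map_eq_abs_det b e hΛb h
  rwa [hdet, abs_of_nonneg (sq_nonneg _)] at hcard

theorem sub_one_mul_mem {ω : ℂ} (h : ∀ x ∈ Λ, ω * x ∈ Λ) : ∀ x ∈ Λ, (ω - 1) * x ∈ Λ :=
  fun x hx ↦ by simpa only [sub_one_mul] using Λ.sub_mem (h x hx) hx

theorem setOf_torusMul_eq_self {ω : ℂ} (h : ∀ x ∈ Λ, ω * x ∈ Λ) :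
    {x : ℂ ⧸ Λ | torusMul Λ ω h x = x} = (torusMul Λ (ω - 1) (sub_one_mul_mem h)).ker := by
  ext x
  induction x using QuotientAddGroup.induction_on with
  | H z =>
    have hsub : torusMul Λ (ω - 1) (sub_one_mul_mem h) z = torusMul Λ ω h z - z :=
      congrArg (QuotientAddGroup.mk' Λ) (sub_one_mul ω z)
    rw [Set.mem_ofPred_eq, SetLike.mem_coe, AddMonoidHom.mem_ker, hsub, sub_eq_zero]

theorem card_torus_rotation_fixed_points_general {ω : ℂ} (hω : ω ≠ 1) {v w : ℂ}
    (hindep : LinearIndependent ℝ ![v, w]) (hΛ : Λ = AddSubgroup.closure {v, w})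
    (hsub : ∀ x ∈ Λ, ω * x ∈ Λ) :
    {x : ℂ ⧸ Λ | torusMul Λ ω hsub x = x}.Finite ∧
      (Nat.card {x : ℂ ⧸ Λ | torusMul Λ ω hsub x = x} : ℝ) = ‖ω - 1‖ ^ 2 := by
  have hα : ω - 1 ≠ 0 := sub_ne_zero.mpr hω
  have hcard : (Nat.card {x : ℂ ⧸ Λ | torusMul Λ ω hsub x = x} : ℝ) = ‖ω - 1‖ ^ 2 := by
    rw [setOf_torusMul_eq_self]
    exact natCard_ker_torusMul hα hindep hΛ (sub_one_mul_mem hsub)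
  have hcard_ne_zero : Nat.card {x : ℂ ⧸ Λ | torusMul Λ ω hsub x = x} ≠ 0 := by
    rw [← Nat.cast_ne_zero (R := ℝ), hcard]
    exact pow_ne_zero 2 (norm_ne_zero_iff.mpr hα)
  exact ⟨Nat.finite_of_card_ne_zero hcard_ne_zero, hcard⟩

end Torus

theorem norm_exp_two_pi_mul_I_div_sub_one_sq (x : ℝ) :
    ‖Complex.exp (2 * Real.pi * Complex.I / x) - 1‖ ^ 2 = 4 * Real.sin (Real.pi / x) ^ 2 := by
  have harg : (2 * Real.pi * Complex.I / x : ℂ) = Complex.I * (2 * (Real.pi / x) : ℝ) := by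
    push_cast
    ring
  rw [harg, Complex.norm_exp_I_mul_ofReal_sub_one, mul_div_cancel_left₀ _ two_ne_zero,
    Real.norm_eq_abs, sq_abs, mul_pow]
  norm_num

/-- Lemma 5.3, cardinality: for `n ≥ 2`, `ω = exp(2πi/n)`, and a lattice
`Λ = ℤv + ℤw` with `ωΛ = Λ`, the set of points of the torus `ℂ/Λ` fixed by
multiplication by `ω` is finite with exactly `4·sin²(π/n)` elements. -/
theorem card_torus_rotation_fixed_points (n : ℕ) (hn : 2 ≤ n)
    (ω : ℂ) (hωdef : ω = Complex.exp (2 * Real.pi * Complex.I / n))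
    (Λ : AddSubgroup ℂ) (v w : ℂ)
    (hindep : LinearIndependent ℝ ![v, w])
    (hΛ : Λ = AddSubgroup.closure {v, w})
    (hω : AddSubgroup.map (AddMonoidHom.mulLeft ω) Λ = Λ)
    (hsub : ∀ x ∈ Λ, ω * x ∈ Λ) :
    {x : ℂ ⧸ Λ | torusMul Λ ω hsub x = x}.Finite ∧
      (Nat.card {x : ℂ ⧸ Λ | torusMul Λ ω hsub x = x} : ℝ) =
        4 * Real.sin (Real.pi / n) ^ 2 := by
  have hω_ne_one : ω ≠ 1 := hωdef ▸ (Complex.isPrimitiveRoot_exp n (by lia)).ne_one hn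
  have hnorm : ‖ω - 1‖ ^ 2 = 4 * Real.sin (Real.pi / n) ^ 2 :=
    hωdef ▸ norm_exp_two_pi_mul_I_div_sub_one_sq n
  exact hnorm ▸ card_torus_rotation_fixed_points_general hω_ne_one hindep hΛ hsub
end
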